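/- arXiv:1111.6206 — 2 statements merged into one kernel-verified Lean document; each statement's English description precedes it below -/
import Mathlib

section
/- Let A and B be real symmetric 2×2 matrices with A positive semidefinite and B positive definite, and let δ ∈ (0, 1]. Then √(det(A + δ·B)) ≤ √(det A) + √δ · √( det B · trace(B⁻¹ · A) + det B ). -/
open Matrix

/-!
The determinant of a 2×2 matrix is quadratic, so
`det (A + δB) = det A + δ · det B · tr(B⁻¹A) + δ² · det B` for invertible `B`.
Since `δ² ≤ δ` and `det B > 0`, this is at most `det A + δ (det B · tr(B⁻¹A) + det B)`, and
subadditivity of the square root finishes the proof.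
-/

/-- The expansion of `det (A + δB)` in powers of `δ`; the mixed term is `tr(adj(B) A)`. -/
lemma det_add_smul_fin_two (A B : Matrix (Fin 2) (Fin 2) ℝ) (δ : ℝ) (hB : B.det ≠ 0) :
    (A + δ • B).det = A.det + δ * (B.det * (B⁻¹ * A).trace) + δ ^ 2 * B.det := by
  have hadj : B.det * (B⁻¹ * A).trace = (B.adjugate * A).trace := by
    rw [Matrix.inv_def, Ring.inverse_eq_inv', Matrix.smul_mul, Matrix.trace_smul, smul_eq_mul,
      mul_inv_cancel_left₀ hB]
  rw [hadj, Matrix.adjugate_fin_two]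
  simp [Matrix.det_fin_two, Matrix.trace_fin_two, Matrix.vecMul, dotProduct, Fin.sum_univ_two]
  ring

/-- No sign condition is needed, because `Real.sqrt` vanishes on negative numbers and hence
`t ≤ √t ^ 2` for every real `t`. -/
lemma sqrt_add_le_sqrt_add_sqrt (x y : ℝ) : √(x + y) ≤ √x + √y := by
  have key (t : ℝ) : t ≤ √t ^ 2 := by
    rcases le_total 0 t with h | h
    · exact (Real.sq_sqrt h).ge
    · exact h.trans (sq_nonneg _)
  refine Real.sqrt_le_iff.mpr ⟨by positivity, ?_⟩
  have hxy : 0 ≤ √x * √y := by positivity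
  nlinarith [key x, key y]

/-- Pointwise matrix inequality behind Theorem 3.4 of the paper: for a positive
semidefinite symmetric 2×2 matrix `A`, a positive definite symmetric 2×2 matrix `B`
and `δ ∈ (0,1]`, one has
`√(det(A + δB)) ≤ √(det A) + √δ·√(det B·trace(B⁻¹A) + det B)`. -/
theorem sqrt_det_perturbation (A B : Matrix (Fin 2) (Fin 2) ℝ) (δ : ℝ)
    (hA : A.PosSemidef) (hB : B.PosDef) (hδ0 : 0 < δ) (hδ1 : δ ≤ 1) :
    Real.sqrt (A + δ • B).det ≤
      Real.sqrt A.det + Real.sqrt δ * Real.sqrt (B.det * (B⁻¹ * A).trace + B.det) := by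
  have hdet : 0 < B.det := hB.det_pos
  rw [det_add_smul_fin_two A B δ hdet.ne', ← Real.sqrt_mul hδ0.le]
  refine le_trans (Real.sqrt_le_sqrt ?_) (sqrt_add_le_sqrt_add_sqrt _ _)
  have hsq : δ ^ 2 * B.det ≤ δ * B.det :=
    mul_le_mul_of_nonneg_right (by nlinarith) hdet.le
  linarith
end

section
/- There exists ε₁ > 0 such that the following holds. Let B₁ be the open unit ball in ℝ² and S² the unit sphere in ℝ³. Let v : ℝ² → ℝ³ be C² on the closed unit ball with |v(x)| = 1 for all x in the closed ball, satisfying the harmonic map equation Δv(x) + |∇v(x)|²·v(x) = 0 for x ∈ B₁, and with energy ∫_{B₁} |∇v|² ≤ ε₁. Let u : ℝ² → ℝ³ be Lipschitz on the closed unit ball with |u(x)| = 1 for all x in the closed ball and u = v on the boundary circle ∂B₁. Then ∫_{B₁} |∇u|² − ∫_{B₁} |∇v|² ≥ (1/2)·∫_{B₁} |∇u − ∇v|². -/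
/-!
Put `w = u - v`, extended by zero outside the disk. Since `|u| = |v| = 1`, one has
`2⟨v, w⟩ = -|w|²`, so testing the harmonic map equation against `w` gives
`∫|∇u|² - ∫|∇v|² = ∫|∇w|² - ∫|∇v|²|w|²` (`energy_difference`). It remains to prove
`∫|∇v|²|w|² ≤ ½∫|∇w|²` (`weighted_le_half_energy`), which follows from two facts.

* Interior gradient bound (`interior_gradient_bound`): `(1 - |x|)²|∇v(x)|²` is bounded by a constant
  times the energy `∫|∇v|²` when the latter is small. Consider a maximum point `x₀` of
  `(1 - |x|)²|∇v|²`. On the ball of radius `(1 - |x₀|)/2` around `x₀`, `|Δv| = |∇v|² ≤ 4|∇v(x₀)|²`.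
  The mean value estimate `|∂ⱼv(x₀)| ≤ C r⁻¹ (∫_{B_r(x₀)}|∇v|²)^{1/2} + r sup|Δv|`
  (`gradient_estimate`), at a suitable radius `r`, then bounds `|∇v(x₀)|`. The mean value estimate
  itself comes from differentiating in `ρ` the averages `∫ η(y) ∂ⱼv(x₀ + ρy) dy` for a radial bump
  `η`: up to the angular derivative of the other partial derivative of `v`, which integrates to zero
  against a radial weight, the radial derivative of `∂ⱼv` is `yⱼ Δv`. This argument uses only two
  derivatives of `v`, in contrast to one based on the Bochner formula.

* A Hardy inequality (`hardy`): `∫|w|²/(1 + τ - |x|²)² ≤ ∫|∇w|²` for every `τ > 0`. It follows by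
  integrating `|w|² div X` by parts for the field `X = x/(1 + τ - |x|²)`, which satisfies
  `div X - |X|² ≥ (1 + τ - |x|²)⁻²`. The shift `τ` keeps `X` smooth up to the boundary; as
  `|∇v|²` is bounded on the disk, a small `τ` loses little in the comparison of `|∇v|²` with the
  Hardy weight.

Integration by parts for the Lipschitz function `w` is Mathlib's
`LipschitzWith.integral_lineDeriv_mul_eq`, and Rademacher's theorem provides its derivative almost
everywhere.
-/

open MeasureTheory

/-- Partial derivative of a map `ℝ² → ℝ³` in the `i`-th coordinate direction. -/
noncomputable def pderiv2 (v : EuclideanSpace ℝ (Fin 2) → EuclideanSpace ℝ (Fin 3))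
    (i : Fin 2) (x : EuclideanSpace ℝ (Fin 2)) : EuclideanSpace ℝ (Fin 3) :=
  fderiv ℝ v x (EuclideanSpace.single i 1)

/-- Energy density `|∇v|²`: the sum of the squared norms of the two partial derivatives. -/
noncomputable def energyDensity (v : EuclideanSpace ℝ (Fin 2) → EuclideanSpace ℝ (Fin 3))
    (x : EuclideanSpace ℝ (Fin 2)) : ℝ :=
  ∑ i : Fin 2, ‖pderiv2 v i x‖ ^ 2

/-- Componentwise Laplacian `Δv` of a map `ℝ² → ℝ³`. -/
noncomputable def laplacian2 (v : EuclideanSpace ℝ (Fin 2) → EuclideanSpace ℝ (Fin 3))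
    (x : EuclideanSpace ℝ (Fin 2)) : EuclideanSpace ℝ (Fin 3) :=
  ∑ i : Fin 2, fderiv ℝ (fun y => fderiv ℝ v y (EuclideanSpace.single i 1)) x
    (EuclideanSpace.single i 1)

/-! ### Averages against a radial bump function -/

/-- The Euclidean plane. -/
abbrev Plane := EuclideanSpace ℝ (Fin 2)
/-- Euclidean three-space. -/
abbrev Space3 := EuclideanSpace ℝ (Fin 3)

/-- A smooth radial bump function on the plane, positive exactly on the open unit disk. It is not
normalised to have integral one. -/
noncomputable def bump (y : Plane) : ℝ := Real.smoothTransition (1 - ‖y‖ ^ 2)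

/-- The `i`-th standard basis vector of the plane. -/
noncomputable abbrev basisVec (i : Fin 2) : Plane := EuclideanSpace.single i 1

lemma bump_contDiff : ContDiff ℝ 1 bump := by
  unfold bump
  exact Real.smoothTransition.contDiff.comp (contDiff_const.sub (contDiff_norm_sq ℝ))

lemma bump_nonneg (y : Plane) : 0 ≤ bump y := Real.smoothTransition.nonneg _

lemma bump_le_one (y : Plane) : bump y ≤ 1 := Real.smoothTransition.le_one _

lemma bump_eq_zero {y : Plane} (hy : 1 ≤ ‖y‖) : bump y = 0 :=
  Real.smoothTransition.zero_of_nonpos (by nlinarith)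

lemma bump_hasCompactSupport : HasCompactSupport bump :=
  HasCompactSupport.intro (isCompact_closedBall (0 : Plane) 1) fun y hy => bump_eq_zero <| by
    have : 1 < ‖y‖ := by simpa using hy
    exact this.le

lemma bump_integrable : Integrable bump :=
  bump_contDiff.continuous.integrable_of_hasCompactSupport bump_hasCompactSupport

lemma bump_integral_pos : 0 < ∫ y, bump y := by
  apply bump_contDiff.continuous.integral_pos_of_hasCompactSupport_nonneg_nonzero
    bump_hasCompactSupport bump_nonneg (x := 0)
  simp [bump]

lemma bump_fderiv (y : Plane) (i : Fin 2) :
    fderiv ℝ bump y (basisVec i) = deriv Real.smoothTransition (1 - ‖y‖ ^ 2) * (-(2 * y i)) := by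
  have h1 : HasDerivAt Real.smoothTransition (deriv Real.smoothTransition (1 - ‖y‖ ^ 2))
      (1 - ‖y‖ ^ 2) :=
    ((Real.smoothTransition.contDiff (n := 1)).differentiable (by simp) _).hasDerivAt
  have h2 : HasFDerivAt (fun y : Plane => 1 - ‖y‖ ^ 2) (-(2 • innerSL ℝ y)) y :=
    (hasStrictFDerivAt_norm_sq y).hasFDerivAt.const_sub 1
  have h3 : HasFDerivAt bump _ y := h1.comp_hasFDerivAt y h2
  rw [h3.fderiv]
  simp [basisVec, EuclideanSpace.inner_single_right]

lemma plane_eq_sum (y : Plane) {j k : Fin 2} (hjk : j ≠ k) :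
    y = y j • basisVec j + y k • basisVec k := by
  ext i
  fin_cases j <;> fin_cases k <;> fin_cases i <;> simp_all [basisVec]

lemma bump_smul_integrable {f : Plane → Space3} (hf : Continuous f) :
    Integrable (fun y => bump y • f y) :=
  (bump_contDiff.continuous.smul hf).integrable_of_hasCompactSupport
    bump_hasCompactSupport.smul_right

lemma coord_contDiff (j : Fin 2) {n : WithTop ℕ∞} : ContDiff ℝ n (fun y : Plane => y j) :=
  (EuclideanSpace.proj (𝕜 := ℝ) j).contDiff

lemma coord_fderiv (j : Fin 2) (y z : Plane) : fderiv ℝ (fun y : Plane => y j) y z = z j := by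
  have : HasFDerivAt (fun y : Plane => y j) (EuclideanSpace.proj (𝕜 := ℝ) j) y :=
    (EuclideanSpace.proj (𝕜 := ℝ) j : Plane →L[ℝ] ℝ).hasFDerivAt
  rw [this.fderiv]; rfl

/-- Integration by parts; the right-hand side is symmetric in `j` and `k` because `bump` is radial. -/
lemma integral_bump_ibp {b : Plane → Space3} (hb : ContDiff ℝ 1 b) {j k : Fin 2} (hjk : j ≠ k) :
    ∫ y, bump y • (y j • fderiv ℝ b y (basisVec k)) =
      ∫ y : Plane, (2 * deriv Real.smoothTransition (1 - ‖y‖ ^ 2) * (y j * y k)) • b y := by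
  have hf : ContDiff ℝ 1 (fun y : Plane => bump y * y j) := bump_contDiff.mul (coord_contDiff j)
  have hfc : HasCompactSupport (fun y : Plane => bump y * y j) :=
    bump_hasCompactSupport.mul_right
  have hd (y : Plane) : fderiv ℝ (fun y : Plane => bump y * y j) y (basisVec k)
      = -(2 * deriv Real.smoothTransition (1 - ‖y‖ ^ 2) * (y j * y k)) := by
    rw [fderiv_fun_mul (bump_contDiff.differentiable (by simp) y)
      ((coord_contDiff j (n := 1)).differentiable (by simp) y)]
    simp only [add_apply, smul_apply, coord_fderiv,
      bump_fderiv, smul_eq_mul]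
    simp [basisVec, hjk]
    ring
  have key := integral_smul_fderiv_eq_neg_fderiv_smul_of_integrable (μ := (volume : Measure Plane))
    (f := fun y : Plane => bump y * y j) (g := b) (v := basisVec k) ?_ ?_ ?_
    (fun x _ => hf.differentiable (by simp) x) (fun x _ => hb.differentiable (by simp) x)
  · simp only [hd, mul_smul] at key
    simp only [mul_smul]
    rw [key, ← integral_neg]
    simp [mul_smul]
  · refine Continuous.integrable_of_hasCompactSupport ?_ ?_
    · exact ((hf.continuous_fderiv (by simp)).clm_apply continuous_const).smul hb.continuous
    · exact (hfc.fderiv_apply (𝕜 := ℝ) _).smul_right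
  · refine Continuous.integrable_of_hasCompactSupport ?_ hfc.smul_right
    exact hf.continuous.smul ((hb.continuous_fderiv (by simp)).clm_apply continuous_const)
  · exact (hf.continuous.smul hb.continuous).integrable_of_hasCompactSupport hfc.smul_right

/-- Angular derivatives have integral zero against a radial weight. -/
lemma integral_bump_rot {b : Plane → Space3} (hb : ContDiff ℝ 1 b) {j k : Fin 2} (hjk : j ≠ k) :
    ∫ y, bump y • (y k • fderiv ℝ b y (basisVec j) - y j • fderiv ℝ b y (basisVec k)) = 0 := by
  have h1 := integral_bump_ibp hb hjk
  have h2 := integral_bump_ibp hb hjk.symm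
  have hI (j k : Fin 2) : Integrable fun y : Plane => bump y • (y j • fderiv ℝ b y (basisVec k)) :=
    bump_smul_integrable ((coord_contDiff j (n := 1)).continuous.smul
      ((hb.continuous_fderiv (by simp)).clm_apply continuous_const))
  simp only [smul_sub]
  rw [integral_sub (hI _ _) (hI _ _), h1, h2]
  simp [mul_comm]

lemma hasDerivAt_bump_average {a : Plane → Space3} (ha : ContDiff ℝ 1 a) (x₀ : Plane) (ρ : ℝ) :
    HasDerivAt (fun ρ : ℝ => ∫ y, bump y • a (x₀ + ρ • y))
      (∫ y, bump y • fderiv ℝ a (x₀ + ρ • y) y) ρ := by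
  obtain ⟨M, hM⟩ := (isCompact_closedBall x₀ (|ρ| + 1)).exists_bound_of_continuousOn
    (ha.continuous_fderiv (by simp)).continuousOn
  have hcont (ρ : ℝ) : Continuous fun y : Plane => a (x₀ + ρ • y) :=
    ha.continuous.comp (by fun_prop)
  refine (hasDerivAt_integral_of_dominated_loc_of_deriv_le (s := Metric.ball ρ 1)
    (bound := fun y => bump y * M)
    (F := fun (ρ : ℝ) y => bump y • a (x₀ + ρ • y))
    (F' := fun (ρ : ℝ) y => bump y • fderiv ℝ a (x₀ + ρ • y) y)
    (Metric.ball_mem_nhds ρ one_pos) ?_ (bump_smul_integrable (hcont ρ)) ?_ ?_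
    (bump_integrable.mul_const M) ?_).2
  · exact Filter.Eventually.of_forall fun ρ => (bump_smul_integrable (hcont ρ)).1
  · refine (bump_smul_integrable ?_).1
    exact ((ha.continuous_fderiv (by simp)).comp (by fun_prop)).clm_apply continuous_id
  · refine Filter.Eventually.of_forall fun y t ht => ?_
    rw [norm_smul, Real.norm_of_nonneg (bump_nonneg y)]
    by_cases hy : 1 ≤ ‖y‖
    · simp [bump_eq_zero hy]
    push Not at hy
    refine mul_le_mul_of_nonneg_left ?_ (bump_nonneg y)
    have hmem : x₀ + t • y ∈ Metric.closedBall x₀ (|ρ| + 1) := by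
      rw [mem_closedBall_iff_norm, add_sub_cancel_left, norm_smul]
      have h1 : ‖t‖ ≤ |ρ| + 1 := by
        have : |t - ρ| < 1 := by simpa [Real.dist_eq] using ht
        have h2 := abs_add_le (t - ρ) ρ
        rw [sub_add_cancel] at h2
        rw [Real.norm_eq_abs]; linarith
      nlinarith [norm_nonneg t, norm_nonneg y]
    have h3 := hM _ hmem
    calc ‖fderiv ℝ a (x₀ + t • y) y‖ ≤ ‖fderiv ℝ a (x₀ + t • y)‖ * ‖y‖ :=
          ContinuousLinearMap.le_opNorm _ _
      _ ≤ M := by nlinarith [norm_nonneg y, norm_nonneg (fderiv ℝ a (x₀ + t • y))]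
  · refine Filter.Eventually.of_forall fun y t ht => ?_
    have h1 : HasDerivAt (fun t : ℝ => x₀ + t • y) y t := by
      simpa using ((hasDerivAt_id t).smul_const y).const_add x₀
    exact (((ha.differentiable (by simp) _).hasFDerivAt).comp_hasDerivAt t h1).const_smul (bump y)

lemma pderiv2_contDiff {v : Plane → Space3} (hv : ContDiff ℝ 2 v) (j : Fin 2) :
    ContDiff ℝ 1 (pderiv2 v j) :=
  (hv.fderiv_right (m := 1) (by norm_num)).clm_apply contDiff_const

lemma pderiv2_symm {v : Plane → Space3} (hv : ContDiff ℝ 2 v) (j k : Fin 2) (x : Plane) :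
    fderiv ℝ (pderiv2 v j) x (basisVec k) = fderiv ℝ (pderiv2 v k) x (basisVec j) := by
  have hs : IsSymmSndFDerivAt ℝ v x := hv.contDiffAt.isSymmSndFDerivAt (by simp)
  have hd : DifferentiableAt ℝ (fderiv ℝ v) x :=
    (hv.fderiv_right (m := 1) (by norm_num)).differentiable (by simp) x
  have (i : Fin 2) (z : Plane) :
      fderiv ℝ (pderiv2 v i) x z = fderiv ℝ (fderiv ℝ v) x z (basisVec i) := by
    have := hd.hasFDerivAt.clm_apply (hasFDerivAt_const (basisVec i) x)
    unfold pderiv2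
    rw [this.fderiv]
    simp
  rw [this, this]
  exact hs _ _

lemma laplacian2_eq (v : Plane → Space3) (x : Plane) {j k : Fin 2} (hjk : j ≠ k) :
    laplacian2 v x = fderiv ℝ (pderiv2 v j) x (basisVec j)
      + fderiv ℝ (pderiv2 v k) x (basisVec k) := by
  unfold laplacian2
  rw [Fin.sum_univ_two]
  fin_cases j <;> fin_cases k <;> simp_all
  · rfl
  · rw [add_comm]; rfl

/-- The radial derivative of `∂ⱼv` differs from `yⱼ Δv` by an angular derivative of the other partial
derivative, which does not contribute to the integral. -/
lemma integral_bump_fderiv {v : Plane → Space3} (hv : ContDiff ℝ 2 v) (x₀ : Plane) {ρ : ℝ}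
    (hρ : ρ ≠ 0) (j : Fin 2) :
    ∫ y, bump y • fderiv ℝ (pderiv2 v j) (x₀ + ρ • y) y =
      ∫ y, bump y • (y j • laplacian2 v (x₀ + ρ • y)) := by
  obtain ⟨k, hjk⟩ : ∃ k, j ≠ k := ⟨j + 1, by fin_cases j <;> simp⟩
  have hk := pderiv2_contDiff hv k
  set b : Plane → Space3 := fun y => pderiv2 v k (x₀ + ρ • y) with hbdef
  have hb : ContDiff ℝ 1 b := hk.comp (by fun_prop)
  have hbd (y z : Plane) : fderiv ℝ b y z = ρ • fderiv ℝ (pderiv2 v k) (x₀ + ρ • y) z := by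
    have h1 : HasFDerivAt (fun y : Plane => x₀ + ρ • y) (ρ • ContinuousLinearMap.id ℝ Plane) y :=
      ((hasFDerivAt_id y).const_smul ρ).const_add x₀
    have h2 := ((hk.differentiable (by simp) _).hasFDerivAt).comp y h1
    have h3 : fderiv ℝ b y = _ := h2.fderiv
    rw [h3]
    simp
  have hrot := integral_bump_rot hb hjk
  have hpt (y : Plane) : bump y • fderiv ℝ (pderiv2 v j) (x₀ + ρ • y) y =
      bump y • (y j • laplacian2 v (x₀ + ρ • y)) +
        ρ⁻¹ • (bump y • (y k • fderiv ℝ b y (basisVec j) - y j • fderiv ℝ b y (basisVec k))) := by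
    have hL (L : Plane →L[ℝ] Space3) : L y = y j • L (basisVec j) + y k • L (basisVec k) := by
      rw [← map_smul, ← map_smul, ← map_add, ← plane_eq_sum y hjk]
    rw [hL, pderiv2_symm hv j k,
      laplacian2_eq v _ hjk, hbd, hbd, smul_comm (y k) ρ, smul_comm (y j) ρ, ← smul_sub,
      smul_comm (bump y) ρ, inv_smul_smul₀ hρ, ← smul_add]
    congr 1
    rw [smul_add]
    abel
  simp only [hpt]
  rw [integral_add, integral_smul, hrot, smul_zero, add_zero]
  · refine bump_smul_integrable ((coord_contDiff j (n := 1)).continuous.smul ?_)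
    have (i : Fin 2) := (pderiv2_contDiff hv i).continuous_fderiv (by simp)
    unfold laplacian2
    refine continuous_finsetSum _ fun i _ => ?_
    exact ((this i).comp (by fun_prop)).clm_apply continuous_const
  · refine (bump_smul_integrable ?_).smul ρ⁻¹
    have h (i : Fin 2) : Continuous fun y => fderiv ℝ b y (basisVec i) :=
      (hb.continuous_fderiv (by simp)).clm_apply continuous_const
    exact ((coord_contDiff k (n := 1)).continuous.smul (h j)).sub
      ((coord_contDiff j (n := 1)).continuous.smul (h k))

/-- The `bump`-weighted average of `∂ⱼv` over `B_r(x₀)` differs from `∂ⱼv(x₀)` by at most `r sup|Δv|`: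
the derivative of the average in the radius is bounded by `sup|Δv|`. -/
lemma bump_average_sub_le {v : Plane → Space3} (hv : ContDiff ℝ 2 v) (x₀ : Plane) {r G : ℝ}
    (hr : 0 < r) (hG : ∀ x ∈ Metric.ball x₀ r, ‖laplacian2 v x‖ ≤ G) (j : Fin 2) :
    ‖(∫ y, bump y • pderiv2 v j (x₀ + r • y)) - (∫ y, bump y) • pderiv2 v j x₀‖
      ≤ (∫ y, bump y) * G * r := by
  set Φ : ℝ → Space3 := fun ρ => ∫ y, bump y • pderiv2 v j (x₀ + ρ • y) with hΦ
  have hd := hasDerivAt_bump_average (pderiv2_contDiff hv j) x₀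
  have h0 : Φ 0 = (∫ y, bump y) • pderiv2 v j x₀ := by
    simp only [hΦ, zero_smul, add_zero]
    exact integral_smul_const _ _
  have hG0 : 0 ≤ G := (norm_nonneg _).trans (hG x₀ (Metric.mem_ball_self hr))
  have hbound (ρ : ℝ) (h1 : 0 < ρ) (h2 : ρ ≤ r) :
      ‖∫ y, bump y • fderiv ℝ (pderiv2 v j) (x₀ + ρ • y) y‖ ≤ (∫ y, bump y) * G := by
    rw [integral_bump_fderiv hv x₀ h1.ne', ← integral_mul_const]
    refine norm_integral_le_of_norm_le (bump_integrable.mul_const G)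
      (Filter.Eventually.of_forall fun y => ?_)
    rw [norm_smul, Real.norm_of_nonneg (bump_nonneg y)]
    by_cases hy : 1 ≤ ‖y‖
    · simp [bump_eq_zero hy]
    push Not at hy
    refine mul_le_mul_of_nonneg_left ?_ (bump_nonneg y)
    rw [norm_smul]
    have hmem : x₀ + ρ • y ∈ Metric.ball x₀ r := by
      rw [mem_ball_iff_norm, add_sub_cancel_left, norm_smul, Real.norm_of_nonneg h1.le]
      nlinarith [norm_nonneg y]
    have h3 := hG _ hmem
    have h4 : ‖y j‖ ≤ 1 := (PiLp.norm_apply_le y j).trans hy.le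
    nlinarith [norm_nonneg (y j), norm_nonneg (laplacian2 v (x₀ + ρ • y))]
  -- The derivative was identified for positive radii only, so the mean value inequality is applied
  -- on `[δ, r]`, followed by `δ → 0`.
  have hseg (δ : ℝ) (h1 : 0 < δ) (h2 : δ ≤ r) : ‖Φ r - Φ δ‖ ≤ (∫ y, bump y) * G * (r - δ) :=
    norm_image_sub_le_of_norm_deriv_le_segment' (fun ρ _ => (hd ρ).hasDerivWithinAt)
      (fun ρ hρ => hbound ρ (h1.trans_le hρ.1) hρ.2.le) r ⟨h2, le_rfl⟩
  have hΦc : Continuous Φ := continuous_iff_continuousAt.2 fun ρ => (hd ρ).continuousAt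
  have ht1 : Filter.Tendsto (fun δ => ‖Φ r - Φ δ‖) (nhdsWithin 0 (Set.Ioi 0))
      (nhds ‖Φ r - Φ 0‖) :=
    ((continuous_const.sub hΦc).norm.tendsto 0).mono_left nhdsWithin_le_nhds
  have ht2 : Filter.Tendsto (fun δ => (∫ y, bump y) * G * (r - δ)) (nhdsWithin 0 (Set.Ioi 0))
      (nhds ((∫ y, bump y) * G * (r - 0))) :=
    ((continuous_const.mul (continuous_const.sub continuous_id)).tendsto 0).mono_left
      nhdsWithin_le_nhds
  have := le_of_tendsto_of_tendsto ht1 ht2 (by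
    filter_upwards [Ioc_mem_nhdsGT hr] with δ hδ using hseg δ hδ.1 hδ.2)
  rwa [h0, sub_zero] at this

/-! ### Gradient estimates -/

lemma integral_ball_scale (f : Plane → ℝ) (x₀ : Plane) {r : ℝ} (hr : 0 < r) :
    ∫ y in Metric.ball (0 : Plane) 1, f (x₀ + r • y) =
      (r ^ 2)⁻¹ * ∫ x in Metric.ball x₀ r, f x := by
  have h1 := Measure.setIntegral_comp_smul_of_pos (volume : Measure Plane)
    (fun z => f (x₀ + z)) (Metric.ball (0 : Plane) 1) hr
  have h2 : ∫ z in Metric.ball (0 : Plane) r, f (x₀ + z) = ∫ x in Metric.ball x₀ r, f x := by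
    have h3 := (measurePreserving_add_left (volume : Measure Plane) x₀).setIntegral_preimage_emb
      (measurableEmbedding_addLeft x₀) f (Metric.ball x₀ r)
    rw [← h3]
    congr 2
    ext z
    simp
  rw [h1, smul_unitBall_of_pos hr, h2]
  simp

/-- Cauchy–Schwarz and rescaling: averages of `∂ⱼv` over `B_r(x₀)` are controlled by the energy. -/
lemma norm_bump_average_le {v : Plane → Space3} (hv : ContDiff ℝ 2 v) (x₀ : Plane) {r s : ℝ}
    (hr : 0 < r) (hs : 0 < s)
    (hE : ∫ x in Metric.ball x₀ r, energyDensity v x ≤ s ^ 2) (j : Fin 2) :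
    ‖∫ y, bump y • pderiv2 v j (x₀ + r • y)‖
      ≤ (volume.real (Metric.ball (0 : Plane) 1) + 1) * s / r := by
  have hcont (i : Fin 2) : Continuous (pderiv2 v i) := (pderiv2_contDiff hv i).continuous
  have hint {f : Plane → ℝ} (hf : Continuous f) (x : Plane) (r : ℝ) :
      IntegrableOn f (Metric.ball x r) :=
    (hf.continuousOn.integrableOn_compact (isCompact_closedBall x r)).mono_set
      Metric.ball_subset_closedBall
  have hE' : ∫ x in Metric.ball x₀ r, ‖pderiv2 v j x‖ ^ 2 ≤ s ^ 2 := by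
    refine le_trans (integral_mono (hint ((hcont j).norm.pow 2) _ _) (hint ?_ _ _) fun x => ?_) hE
    · exact continuous_finsetSum _ fun i _ => (hcont i).norm.pow 2
    · exact Finset.single_le_sum (f := fun i => ‖pderiv2 v i x‖ ^ 2)
        (fun i _ => by positivity) (Finset.mem_univ j)
  have hscale := integral_ball_scale (fun x => ‖pderiv2 v j x‖ ^ 2) x₀ hr
  have hc : Continuous fun y : Plane => ‖pderiv2 v j (x₀ + r • y)‖ :=
    ((hcont j).comp (by fun_prop)).norm
  -- The weight `t` balances the two terms of `N ≤ t + t⁻¹ N²`, which replaces Cauchy–Schwarz.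
  set t := s / r with ht
  have htpos : 0 < t := by positivity
  calc ‖∫ y, bump y • pderiv2 v j (x₀ + r • y)‖
      = ‖∫ y in Metric.ball (0 : Plane) 1, bump y • pderiv2 v j (x₀ + r • y)‖ := by
        rw [setIntegral_eq_integral_of_forall_compl_eq_zero]
        intro y hy
        rw [bump_eq_zero (by simpa using hy), zero_smul]
    _ ≤ ∫ y in Metric.ball (0 : Plane) 1, (t + t⁻¹ * ‖pderiv2 v j (x₀ + r • y)‖ ^ 2) := by
        refine norm_integral_le_of_norm_le
          (hint (continuous_const.add (continuous_const.mul (hc.pow 2))) _ _)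
          (Filter.Eventually.of_forall fun y => ?_)
        rw [norm_smul, Real.norm_of_nonneg (bump_nonneg y)]
        have h1 := bump_le_one y
        have h2 := bump_nonneg y
        set N := ‖pderiv2 v j (x₀ + r • y)‖
        have hN : 0 ≤ N := norm_nonneg _
        have h3 : N ≤ t + t⁻¹ * N ^ 2 := by
          have : t⁻¹ * (t - N) ^ 2 ≥ 0 := by positivity
          have h4 : t⁻¹ * (t - N) ^ 2 = t - 2 * N + t⁻¹ * N ^ 2 := by
            field_simp
            ring
          linarith
        nlinarith
    _ = volume.real (Metric.ball (0 : Plane) 1) * t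
          + t⁻¹ * ((r ^ 2)⁻¹ * ∫ x in Metric.ball x₀ r, ‖pderiv2 v j x‖ ^ 2) := by
        have hq : IntegrableOn (fun y => t⁻¹ * ‖pderiv2 v j (x₀ + r • y)‖ ^ 2)
            (Metric.ball (0 : Plane) 1) := hint (continuous_const.mul (hc.pow 2)) _ _
        rw [integral_add (hint continuous_const _ _) hq, integral_const_mul, hscale]
        simp
    _ ≤ volume.real (Metric.ball (0 : Plane) 1) * t + t⁻¹ * ((r ^ 2)⁻¹ * s ^ 2) := by gcongr
    _ = (volume.real (Metric.ball (0 : Plane) 1) + 1) * s / r := by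
        rw [ht]; field_simp

lemma gradient_estimate_global {v : Plane → Space3} (hv : ContDiff ℝ 2 v) (x₀ : Plane) {r s G : ℝ}
    (hr : 0 < r) (hs : 0 < s)
    (hE : ∫ x in Metric.ball x₀ r, energyDensity v x ≤ s ^ 2)
    (hG : ∀ x ∈ Metric.ball x₀ r, ‖laplacian2 v x‖ ≤ G) (j : Fin 2) :
    ‖pderiv2 v j x₀‖
      ≤ (volume.real (Metric.ball (0 : Plane) 1) + 1) / (∫ y, bump y) * s / r + G * r := by
  have h1 := bump_average_sub_le hv x₀ hr hG j
  have h2 := norm_bump_average_le hv x₀ hr hs hE j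
  have hc := bump_integral_pos
  set c := ∫ y, bump y
  set I := ∫ y, bump y • pderiv2 v j (x₀ + r • y)
  have h3 : c * ‖pderiv2 v j x₀‖ ≤ ‖I‖ + ‖I - c • pderiv2 v j x₀‖ := by
    have := norm_sub_le I (I - c • pderiv2 v j x₀)
    rwa [sub_sub_cancel, norm_smul, Real.norm_of_nonneg hc.le] at this
  have h4 : c * ((volume.real (Metric.ball (0 : Plane) 1) + 1) / c * s / r + G * r)
      = (volume.real (Metric.ball (0 : Plane) 1) + 1) * s / r + c * G * r := by
    field_simp
  refine le_of_mul_le_mul_left ?_ hc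
  rw [h4]
  linarith

/-- Mean value estimate for the gradient of a `C²` map. A cutoff function reduces it to the case of a
map that is `C²` on the whole plane. -/
lemma gradient_estimate {v : Plane → Space3} (x₀ : Plane) {r R s G : ℝ}
    (hr : 0 < r) (hrR : r < R) (hv : ContDiffOn ℝ 2 v (Metric.ball x₀ R)) (hs : 0 < s)
    (hE : ∫ x in Metric.ball x₀ r, energyDensity v x ≤ s ^ 2)
    (hG : ∀ x ∈ Metric.ball x₀ r, ‖laplacian2 v x‖ ≤ G) (j : Fin 2) :
    ‖pderiv2 v j x₀‖
      ≤ (volume.real (Metric.ball (0 : Plane) 1) + 1) / (∫ y, bump y) * s / r + G * r := by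
  let χ : ContDiffBump x₀ := ⟨r, (r + R) / 2, hr, by linarith⟩
  let w : Plane → Space3 := fun x => χ x • v x
  have hw : ContDiff ℝ 2 w := by
    rw [contDiff_iff_contDiffAt]
    intro x
    by_cases hx : x ∈ Metric.ball x₀ R
    · exact χ.contDiff.contDiffAt.smul (hv.contDiffAt (Metric.isOpen_ball.mem_nhds hx))
    · have hx' : x ∉ tsupport χ := by
        rw [χ.tsupport_eq]
        simp only [Metric.mem_ball, not_lt, Metric.mem_closedBall, not_le] at hx ⊢
        change (r + R) / 2 < _
        linarith
      have : w =ᶠ[nhds x] fun _ => 0 := by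
        filter_upwards [notMem_tsupport_iff_eventuallyEq.1 hx'] with z hz
        simp [w, hz]
      exact contDiffAt_const.congr_of_eventuallyEq this
  have heq {x : Plane} (hx : x ∈ Metric.ball x₀ r) : w =ᶠ[nhds x] v := by
    filter_upwards [Metric.isOpen_ball.mem_nhds hx] with z hz
    simp [w, χ.one_of_mem_closedBall (Metric.ball_subset_closedBall hz)]
  have hp {x : Plane} (hx : x ∈ Metric.ball x₀ r) (i : Fin 2) : pderiv2 w i x = pderiv2 v i x := by
    simp only [pderiv2, (heq hx).fderiv_eq]
  have hl {x : Plane} (hx : x ∈ Metric.ball x₀ r) : laplacian2 w x = laplacian2 v x := by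
    unfold laplacian2
    refine Finset.sum_congr rfl fun i _ => ?_
    congr 1
    refine Filter.EventuallyEq.fderiv_eq ?_
    filter_upwards [(heq hx).fderiv (𝕜 := ℝ)] with z hz
    rw [hz]
  rw [← hp (Metric.mem_ball_self hr)]
  refine gradient_estimate_global hw x₀ hr hs ?_ (fun x hx => (hl hx).symm ▸ hG x hx) j
  refine le_of_eq_of_le (setIntegral_congr_fun measurableSet_ball fun x hx => ?_) hE
  simp only [energyDensity, hp hx]

/-- The partial derivatives of a map that is `C²` on the closed disk agree on the open disk with maps
that are `C¹` on the closed disk; `pderiv2` itself may take junk values on the boundary circle. -/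
lemma exists_pderiv2_extension {v : Plane → Space3}
    (hv : ContDiffOn ℝ 2 v (Metric.closedBall 0 1)) :
    ∃ D : Fin 2 → Plane → Space3, (∀ i, ContDiffOn ℝ 1 (D i) (Metric.closedBall 0 1)) ∧
      ∀ i, ∀ x ∈ Metric.ball (0 : Plane) 1, pderiv2 v i x = D i x := by
  refine ⟨fun i x => fderivWithin ℝ v (Metric.closedBall 0 1) x (basisVec i), fun i => ?_,
    fun i x hx => ?_⟩
  · have hu : UniqueDiffOn ℝ (Metric.closedBall (0 : Plane) 1) :=
      uniqueDiffOn_convex (convex_closedBall 0 1)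
        (by rw [interior_closedBall _ one_ne_zero]; exact ⟨0, by simp⟩)
    exact (hv.fderivWithin hu (m := 1) (by norm_num)).clm_apply contDiffOn_const
  · beta_reduce
    rw [pderiv2, fderivWithin_of_mem_nhds
      (Filter.mem_of_superset (Metric.isOpen_ball.mem_nhds hx) Metric.ball_subset_closedBall)]

lemma energyDensity_integrableOn {v : Plane → Space3}
    (hv : ContDiffOn ℝ 2 v (Metric.closedBall 0 1)) :
    IntegrableOn (energyDensity v) (Metric.ball 0 1) := by
  obtain ⟨D, hD, hDv⟩ := exists_pderiv2_extension hv
  have hc : ContinuousOn (fun x => ∑ i, ‖D i x‖ ^ 2) (Metric.closedBall (0 : Plane) 1) :=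
    continuousOn_finsetSum _ fun i _ => (hD i).continuousOn.norm.pow 2
  refine ((hc.integrableOn_compact (isCompact_closedBall 0 1)).mono_set
    Metric.ball_subset_closedBall).congr_fun (fun x hx => ?_) measurableSet_ball
  simp only [energyDensity, hDv _ x hx]

lemma energyDensity_nonneg (v : Plane → Space3) (x : Plane) : 0 ≤ energyDensity v x :=
  Finset.sum_nonneg fun _ _ => by positivity

/-- The constant in front of the energy term of `gradient_estimate`. -/
noncomputable def gradConst : ℝ :=
  (volume.real (Metric.ball (0 : Plane) 1) + 1) / (∫ y, bump y)

lemma gradConst_pos : 0 < gradConst := by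
  have := bump_integral_pos
  unfold gradConst
  positivity

/-- Small-energy regularity for harmonic maps into the sphere: the gradient at distance `δ` from the
boundary circle is at most a constant times `δ⁻¹` and the square root of the energy. -/
lemma interior_gradient_bound {v : Plane → Space3}
    (hv : ContDiffOn ℝ 2 v (Metric.closedBall 0 1))
    (hv1 : ∀ x ∈ Metric.closedBall (0 : Plane) 1, ‖v x‖ = 1)
    (hharm : ∀ x ∈ Metric.ball (0 : Plane) 1, laplacian2 v x + energyDensity v x • v x = 0)
    {s : ℝ} (hs : 0 < s) (hsC : 64 * gradConst * s < 1)
    (hE : ∫ x in Metric.ball (0 : Plane) 1, energyDensity v x ≤ s ^ 2) :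
    ∀ x ∈ Metric.ball (0 : Plane) 1,
      (1 - ‖x‖) ^ 2 * energyDensity v x ≤ (8 * gradConst * s) ^ 2 := by
  obtain ⟨D, hD, hDv⟩ := exists_pderiv2_extension hv
  have he {x : Plane} (hx : x ∈ Metric.ball (0 : Plane) 1) :
      energyDensity v x = ∑ i, ‖D i x‖ ^ 2 := by simp only [energyDensity, hDv _ x hx]
  have hc : ContinuousOn (fun x => (1 - ‖x‖) ^ 2 * ∑ i, ‖D i x‖ ^ 2)
      (Metric.closedBall (0 : Plane) 1) :=
    ((continuous_const.sub continuous_norm).pow 2).continuousOn.mul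
      (continuousOn_finsetSum _ fun i _ => (hD i).continuousOn.norm.pow 2)
  obtain ⟨x₀, hx₀, hmax⟩ := (isCompact_closedBall (0 : Plane) 1).exists_isMaxOn
    ⟨0, by simp⟩ hc
  have hC := gradConst_pos
  suffices hmain : (1 - ‖x₀‖) ^ 2 * ∑ i, ‖D i x₀‖ ^ 2 ≤ (8 * gradConst * s) ^ 2 by
    intro x hx
    rw [he hx]
    exact (hmax (Metric.ball_subset_closedBall hx)).trans hmain
  by_cases hb : x₀ ∈ Metric.ball (0 : Plane) 1
  swap
  · have : ‖x₀‖ = 1 := le_antisymm (by simpa using hx₀) (by simpa using hb)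
    rw [this]
    have : 0 ≤ (8 * gradConst * s) ^ 2 := by positivity
    simpa using this
  rw [← he hb]
  set σ := 1 - ‖x₀‖ with hσ
  have hσpos : 0 < σ := by
    have : ‖x₀‖ < 1 := by simpa using hb
    linarith
  set A := Real.sqrt (energyDensity v x₀) with hA
  have hA2 : energyDensity v x₀ = A ^ 2 := (Real.sq_sqrt (energyDensity_nonneg _ _)).symm
  have hA0 : 0 ≤ A := Real.sqrt_nonneg _
  have hsub : Metric.ball x₀ σ ⊆ Metric.ball 0 1 := by
    refine Metric.ball_subset_ball' ?_
    simp [hσ]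
  -- By maximality at `x₀`, the energy density is at most `4 A²` on the ball of radius `σ / 2`.
  have hG {r : ℝ} (hr2 : r ≤ σ / 2) : ∀ x ∈ Metric.ball x₀ r, ‖laplacian2 v x‖ ≤ 4 * A ^ 2 := by
    intro x hx
    have hxd : ‖x - x₀‖ < σ / 2 := (mem_ball_iff_norm.1 hx).trans_le hr2
    have hxb : x ∈ Metric.ball (0 : Plane) 1 := hsub (mem_ball_iff_norm.2 (by linarith))
    have h1 : laplacian2 v x = -(energyDensity v x • v x) := eq_neg_of_add_eq_zero_left (hharm x hxb)
    rw [h1, norm_neg, norm_smul, hv1 x (Metric.ball_subset_closedBall hxb), mul_one,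
      Real.norm_of_nonneg (energyDensity_nonneg _ _)]
    have h2 : (1 - ‖x‖) ^ 2 * energyDensity v x ≤ σ ^ 2 * A ^ 2 := by
      rw [← hA2, he hxb, he hb]
      exact hmax (Metric.ball_subset_closedBall hxb)
    have h3 : σ / 2 ≤ 1 - ‖x‖ := by
      have := norm_le_norm_add_norm_sub' x x₀
      linarith
    have h4 : (σ / 2) ^ 2 * energyDensity v x ≤ σ ^ 2 * A ^ 2 :=
      le_trans (mul_le_mul_of_nonneg_right (by gcongr) (energyDensity_nonneg _ _)) h2
    refine le_of_mul_le_mul_left (a := σ ^ 2) ?_ (by positivity)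
    linarith
  have hstep {r : ℝ} (hr : 0 < r) (hr2 : r ≤ σ / 2) :
      A ≤ 2 * (gradConst * s / r + 4 * A ^ 2 * r) := by
    have hEr : ∫ x in Metric.ball x₀ r, energyDensity v x ≤ s ^ 2 := by
      refine le_trans (setIntegral_mono_set (energyDensity_integrableOn hv)
        (Filter.Eventually.of_forall fun x => energyDensity_nonneg v x) ?_) hE
      exact ((Metric.ball_subset_ball (by linarith)).trans hsub).eventuallyLE
    have hj (j : Fin 2) := gradient_estimate x₀ hr (show r < σ by linarith)
      (hv.mono (hsub.trans Metric.ball_subset_closedBall)) hs hEr (hG hr2) j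
    change ∀ j, ‖pderiv2 v j x₀‖ ≤ gradConst * s / r + 4 * A ^ 2 * r at hj
    have hsum : A ^ 2 = ‖pderiv2 v 0 x₀‖ ^ 2 + ‖pderiv2 v 1 x₀‖ ^ 2 := by
      rw [← hA2, energyDensity, Fin.sum_univ_two]
    have hT : 0 ≤ gradConst * s / r + 4 * A ^ 2 * r := by positivity
    set T := gradConst * s / r + 4 * A ^ 2 * r
    refine le_of_sq_le_sq ?_ (by positivity)
    have h0 := pow_le_pow_left₀ (norm_nonneg _) (hj 0) 2
    have h1 := pow_le_pow_left₀ (norm_nonneg _) (hj 1) 2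
    nlinarith
  rw [hA2, ← mul_pow]
  refine pow_le_pow_left₀ (by positivity) ?_ 2
  -- The radius is `min (σ / 2) (1 / (16 A))`, so that the term `8 A² r` is absorbed by `A / 2`. The
  -- second alternative contradicts the smallness of `s`.
  by_cases hcase : σ * (8 * A) ≤ 1
  · have h := hstep (r := σ / 2) (by positivity) le_rfl
    have h5 : A * σ ≤ 2 * (gradConst * s / (σ / 2) + 4 * A ^ 2 * (σ / 2)) * σ :=
      mul_le_mul_of_nonneg_right h hσpos.le
    have h6 : 2 * (gradConst * s / (σ / 2) + 4 * A ^ 2 * (σ / 2)) * σ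
        = 4 * gradConst * s + 4 * (A * σ) ^ 2 := by
      field_simp
      ring
    rw [h6] at h5
    nlinarith [mul_nonneg hA0 hσpos.le]
  · push Not at hcase
    exfalso
    have hApos : 0 < A := by
      by_contra hn
      have : A = 0 := le_antisymm (not_lt.1 hn) hA0
      rw [this] at hcase
      norm_num at hcase
    have h := hstep (r := 1 / (16 * A)) (by positivity) (by
      rw [div_le_iff₀ (by positivity)]; linarith)
    have h6 : 2 * (gradConst * s / (1 / (16 * A)) + 4 * A ^ 2 * (1 / (16 * A)))
        = 32 * gradConst * s * A + A / 2 := by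
      field_simp
      ring
    rw [h6] at h
    nlinarith

/-! ### Integration by parts on the disk -/

/-- Almost everywhere strong measurability and boundedness on the open unit disk. -/
def BoundedMeas {E : Type*} [NormedAddCommGroup E] (f : Plane → E) : Prop :=
  AEStronglyMeasurable f (volume.restrict (Metric.ball (0 : Plane) 1)) ∧
    ∃ M : ℝ, ∀ x ∈ Metric.ball (0 : Plane) 1, ‖f x‖ ≤ M

lemma BoundedMeas.integrableOn {E : Type*} [NormedAddCommGroup E] {f : Plane → E}
    (hf : BoundedMeas f) : IntegrableOn f (Metric.ball 0 1) := by
  obtain ⟨h1, M, hM⟩ := hf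
  have : IsFiniteMeasure (volume.restrict (Metric.ball (0 : Plane) 1)) :=
    ⟨by simp⟩
  refine Integrable.of_bound h1 M ?_
  exact (ae_restrict_iff' measurableSet_ball).2 (Filter.Eventually.of_forall hM)

lemma BoundedMeas.mul {f g : Plane → ℝ} (hf : BoundedMeas f) (hg : BoundedMeas g) :
    BoundedMeas (fun x => f x * g x) := by
  obtain ⟨h1, M, hM⟩ := hf
  obtain ⟨h2, N, hN⟩ := hg
  refine ⟨h1.mul h2, M * N, fun x hx => ?_⟩
  rw [norm_mul]
  exact mul_le_mul (hM x hx) (hN x hx) (norm_nonneg _) ((norm_nonneg _).trans (hM x hx))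

lemma BoundedMeas.inner {f g : Plane → Space3} (hf : BoundedMeas f) (hg : BoundedMeas g) :
    BoundedMeas (fun x => inner ℝ (f x) (g x)) := by
  obtain ⟨h1, M, hM⟩ := hf
  obtain ⟨h2, N, hN⟩ := hg
  refine ⟨h1.inner h2, M * N, fun x hx => ?_⟩
  exact (norm_inner_le_norm _ _).trans
    (mul_le_mul (hM x hx) (hN x hx) (norm_nonneg _) ((norm_nonneg _).trans (hM x hx)))

lemma BoundedMeas.norm_sq {f : Plane → Space3} (hf : BoundedMeas f) :
    BoundedMeas (fun x => ‖f x‖ ^ 2) := by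
  simpa only [real_inner_self_eq_norm_sq] using hf.inner hf

lemma BoundedMeas.energyDensity {w : Plane → Space3} (h : ∀ i, BoundedMeas (pderiv2 w i)) :
    IntegrableOn (energyDensity w) (Metric.ball 0 1) :=
  integrable_finsetSum _ fun i _ => (h i).norm_sq.integrableOn

lemma boundedMeas_of_lipschitzOn {E : Type*} [NormedAddCommGroup E] [NormedSpace ℝ E]
    {f : Plane → E} {K : NNReal} (hf : LipschitzOnWith K f (Metric.ball 0 1)) :
    BoundedMeas f := by
  refine ⟨hf.continuousOn.aestronglyMeasurable_of_isSeparable measurableSet_ball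
    (TopologicalSpace.IsSeparable.of_separableSpace _), ‖f 0‖ + K, fun x hx => ?_⟩
  have h1 := hf.norm_sub_le hx (Metric.mem_ball_self one_pos)
  have h2 : ‖x‖ < 1 := by simpa using hx
  have h3 := norm_le_norm_add_norm_sub' (f x) (f 0)
  rw [sub_zero] at h1
  nlinarith [K.coe_nonneg]

lemma boundedMeas_fderiv {E : Type*} [NormedAddCommGroup E] [NormedSpace ℝ E]
    [FiniteDimensional ℝ E]
    {f : Plane → E} {K : NNReal} (hf : LipschitzOnWith K f (Metric.ball 0 1)) (i : Fin 2) :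
    BoundedMeas (fun x => fderiv ℝ f x (basisVec i)) := by
  have : CompleteSpace E := FiniteDimensional.complete ℝ E
  borelize E
  refine ⟨(measurable_fderiv_apply_const ℝ f (basisVec i)).aestronglyMeasurable, K,
    fun x hx => ?_⟩
  have h1 := norm_fderiv_le_of_lipschitzOn ℝ (Metric.isOpen_ball.mem_nhds hx) hf
  refine (ContinuousLinearMap.le_of_opNorm_le _ h1 _).trans ?_
  simp

/-- Integration by parts on the disk for real Lipschitz functions, without boundary term since `g`
vanishes outside the open disk. -/
lemma integral_ball_ibp_real {f g : Plane → ℝ} {K L : NNReal}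
    (hf : LipschitzOnWith K f (Metric.ball 0 1)) (hg : LipschitzWith L g)
    (hg0 : ∀ x : Plane, 1 ≤ ‖x‖ → g x = 0) (i : Fin 2)
    (hfd : DifferentiableOn ℝ f (Metric.ball 0 1)) :
    ∫ x in Metric.ball (0 : Plane) 1, fderiv ℝ f x (basisVec i) * g x =
      - ∫ x in Metric.ball (0 : Plane) 1, f x * fderiv ℝ g x (basisVec i) := by
  obtain ⟨F, hF, hFf⟩ := hf.extend_real
  have hcs : HasCompactSupport g := HasCompactSupport.intro (isCompact_closedBall (0 : Plane) 1)
    fun x hx => hg0 x <| by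
      have : 1 < ‖x‖ := by simpa using hx
      exact this.le
  have key := hF.integral_lineDeriv_mul_eq (μ := (volume : Measure Plane)) hg hcs (basisVec i)
  have hsph : ∀ᵐ x : Plane, ‖x‖ ≠ 1 := by
    have h : volume (Metric.sphere (0 : Plane) 1) = 0 := Measure.addHaar_sphere _ _ _
    filter_upwards [measure_eq_zero_iff_ae_notMem.1 h] with x hx
    simpa using hx
  have e1 : ∫ x, lineDeriv ℝ F x (basisVec i) * g x =
      ∫ x in Metric.ball (0 : Plane) 1, fderiv ℝ f x (basisVec i) * g x := by
    rw [← setIntegral_eq_integral_of_forall_compl_eq_zero (s := Metric.ball (0 : Plane) 1)]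
    · refine setIntegral_congr_fun measurableSet_ball fun x hx => ?_
      have h1 : F =ᶠ[nhds x] f := by
        filter_upwards [Metric.isOpen_ball.mem_nhds hx] with z hz using (hFf hz).symm
      have h2 : DifferentiableAt ℝ f x := (hfd x hx).differentiableAt
        (Metric.isOpen_ball.mem_nhds hx)
      beta_reduce
      rw [h1.lineDeriv_eq, h2.lineDeriv_eq_fderiv]
    · intro x hx
      rw [hg0 x (by simpa using hx), mul_zero]
  have e2 : ∫ x, lineDeriv ℝ g x (-basisVec i) * F x =
      - ∫ x in Metric.ball (0 : Plane) 1, f x * fderiv ℝ g x (basisVec i) := by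
    rw [← integral_neg,
      ← setIntegral_eq_integral_of_ae_compl_eq_zero (s := Metric.ball (0 : Plane) 1)]
    · refine setIntegral_congr_ae measurableSet_ball ?_
      filter_upwards [hg.ae_differentiableAt (μ := (volume : Measure Plane))] with x hx hxb
      rw [hx.lineDeriv_eq_fderiv, map_neg, hFf hxb]
      ring
    · filter_upwards [hsph] with x hx hxb
      have hx1 : 1 < ‖x‖ := lt_of_le_of_ne (by simpa using hxb) (Ne.symm hx)
      have h1 : g =ᶠ[nhds x] fun _ => 0 := by
        filter_upwards [(isOpen_lt continuous_const continuous_norm).mem_nhds hx1] with z hz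
        exact hg0 z (le_of_lt hz)
      rw [h1.lineDeriv_eq]
      simp [lineDeriv]
  rw [← e1, key, e2]

lemma coord3_lipschitz (k : Fin 3) : LipschitzWith 1 (fun y : Space3 => y k) :=
  LipschitzWith.of_dist_le_mul fun x y => by
    simpa [dist_eq_norm] using PiLp.norm_apply_le (x - y) k

lemma coord3_fderiv {f : Plane → Space3} {x : Plane} (hf : DifferentiableAt ℝ f x) (k : Fin 3)
    (z : Plane) : fderiv ℝ (fun y => f y k) x z = fderiv ℝ f x z k := by
  have h : HasFDerivAt (fun y => f y k) ((EuclideanSpace.proj (𝕜 := ℝ) k : Space3 →L[ℝ] ℝ).comp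
      (fderiv ℝ f x)) x :=
    (EuclideanSpace.proj (𝕜 := ℝ) k : Space3 →L[ℝ] ℝ).hasFDerivAt.comp x hf.hasFDerivAt
  rw [h.fderiv]
  rfl

lemma integral_ball_ibp {f g : Plane → Space3} {K L : NNReal}
    (hf : LipschitzOnWith K f (Metric.ball 0 1)) (hg : LipschitzWith L g)
    (hg0 : ∀ x : Plane, 1 ≤ ‖x‖ → g x = 0) (i : Fin 2)
    (hfd : DifferentiableOn ℝ f (Metric.ball 0 1)) :
    ∫ x in Metric.ball (0 : Plane) 1, inner ℝ (fderiv ℝ f x (basisVec i)) (g x) =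
      - ∫ x in Metric.ball (0 : Plane) 1, inner ℝ (f x) (fderiv ℝ g x (basisVec i)) := by
  have hfk (k : Fin 3) : LipschitzOnWith (1 * K) (fun x => f x k) (Metric.ball (0 : Plane) 1) :=
    (coord3_lipschitz k).comp_lipschitzOnWith hf
  have hgk (k : Fin 3) : LipschitzWith (1 * L) (fun x => g x k) := (coord3_lipschitz k).comp hg
  have hfd' {x : Plane} (hx : x ∈ Metric.ball (0 : Plane) 1) : DifferentiableAt ℝ f x :=
    (hfd x hx).differentiableAt (Metric.isOpen_ball.mem_nhds hx)
  have hfdk (k : Fin 3) : DifferentiableOn ℝ (fun x => f x k) (Metric.ball (0 : Plane) 1) :=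
    fun x hx => ((EuclideanSpace.proj (𝕜 := ℝ) k : Space3 →L[ℝ] ℝ).differentiableAt.comp x
      (hfd' hx)).differentiableWithinAt
  have key (k : Fin 3) := integral_ball_ibp_real (hfk k) (hgk k)
    (fun x hx => by simp [hg0 x hx]) i (hfdk k)
  have e1 : ∫ x in Metric.ball (0 : Plane) 1, inner ℝ (fderiv ℝ f x (basisVec i)) (g x) =
      ∑ k, ∫ x in Metric.ball (0 : Plane) 1,
        fderiv ℝ (fun x => f x k) x (basisVec i) * g x k := by
    rw [← integral_finsetSum]
    · refine setIntegral_congr_fun measurableSet_ball fun x hx => ?_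
      simp only [PiLp.inner_apply, coord3_fderiv (hfd' hx)]
      exact Finset.sum_congr rfl fun k _ => by simp [mul_comm]
    · exact fun k _ => ((boundedMeas_fderiv (hfk k) i).mul
        (boundedMeas_of_lipschitzOn (hgk k).lipschitzOnWith)).integrableOn
  have e2 : ∫ x in Metric.ball (0 : Plane) 1, inner ℝ (f x) (fderiv ℝ g x (basisVec i)) =
      ∑ k, ∫ x in Metric.ball (0 : Plane) 1,
        f x k * fderiv ℝ (fun x => g x k) x (basisVec i) := by
    rw [← integral_finsetSum]
    · refine setIntegral_congr_ae measurableSet_ball ?_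
      filter_upwards [hg.ae_differentiableAt (μ := (volume : Measure Plane))] with x hx hxb
      simp only [PiLp.inner_apply, coord3_fderiv hx]
      exact Finset.sum_congr rfl fun k _ => by simp [mul_comm]
    · exact fun k _ => ((boundedMeas_of_lipschitzOn (hfk k)).mul
        (boundedMeas_fderiv (hgk k).lipschitzOnWith i)).integrableOn
  rw [e1, e2, ← Finset.sum_neg_distrib]
  exact Finset.sum_congr rfl fun k _ => key k

/-! ### A Hardy inequality -/

lemma hardy_field_fderiv {τ : ℝ} (hτ : 0 < τ) {x : Plane} (hx : ‖x‖ ≤ 1) (i : Fin 2) :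
    fderiv ℝ (fun x : Plane => x i * (1 + τ - ‖x‖ ^ 2)⁻¹) x (basisVec i) =
      (1 + τ - ‖x‖ ^ 2)⁻¹ + 2 * x i ^ 2 * ((1 + τ - ‖x‖ ^ 2)⁻¹) ^ 2 := by
  have hd : (1 + τ - ‖x‖ ^ 2) ≠ 0 := by nlinarith [norm_nonneg x]
  have h1 : HasFDerivAt (fun y : Plane => 1 + τ - ‖y‖ ^ 2) (-(2 • innerSL ℝ x)) x :=
    (hasStrictFDerivAt_norm_sq x).hasFDerivAt.const_sub (1 + τ)
  have h2 := (hasDerivAt_inv hd).comp_hasFDerivAt x h1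
  have h3 : HasFDerivAt (fun y : Plane => y i) (EuclideanSpace.proj (𝕜 := ℝ) i) x :=
    (EuclideanSpace.proj (𝕜 := ℝ) i : Plane →L[ℝ] ℝ).hasFDerivAt
  have h4 := h3.mul h2
  have h5 : fderiv ℝ (fun x : Plane => x i * (1 + τ - ‖x‖ ^ 2)⁻¹) x = _ := h4.fderiv
  rw [h5]
  simp [basisVec, EuclideanSpace.inner_single_right]
  field_simp
  ring

/-- Hardy inequality for a bounded Lipschitz map vanishing outside the disk, with a weight regularised
by `τ > 0`. -/
lemma hardy {w : Plane → Space3} {K : NNReal} {M τ : ℝ} (hw : LipschitzWith K w)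
    (hw0 : ∀ x : Plane, 1 ≤ ‖x‖ → w x = 0) (hM : ∀ x, ‖w x‖ ≤ M) (hτ : 0 < τ) :
    IntegrableOn (fun x => ‖w x‖ ^ 2 * ((1 + τ - ‖x‖ ^ 2)⁻¹) ^ 2) (Metric.ball (0 : Plane) 1) ∧
    ∫ x in Metric.ball (0 : Plane) 1, ‖w x‖ ^ 2 * ((1 + τ - ‖x‖ ^ 2)⁻¹) ^ 2 ≤
      ∫ x in Metric.ball (0 : Plane) 1, energyDensity w x := by
  have hM0 : 0 ≤ M := (norm_nonneg _).trans (hM 0)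
  have hg : LipschitzWith (2 * M.toNNReal * K) (fun x => ‖w x‖ ^ 2) := by
    refine LipschitzWith.of_dist_le_mul fun x y => ?_
    rw [Real.dist_eq]
    have h1 : ‖w x‖ ^ 2 - ‖w y‖ ^ 2 = (‖w x‖ + ‖w y‖) * (‖w x‖ - ‖w y‖) := by ring
    rw [h1, abs_mul, abs_of_nonneg (by positivity : 0 ≤ ‖w x‖ + ‖w y‖)]
    have h2 := (abs_norm_sub_norm_le (w x) (w y)).trans
      (by simpa [dist_eq_norm] using hw.dist_le_mul x y)
    push_cast
    rw [Real.coe_toNNReal M hM0, dist_eq_norm, mul_assoc]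
    have := hM x
    have := hM y
    exact mul_le_mul (by linarith) h2 (abs_nonneg _) (by positivity)
  have hd {x : Plane} (hx : ‖x‖ ≤ 1) : 0 < 1 + τ - ‖x‖ ^ 2 := by nlinarith [norm_nonneg x]
  have hinv : ContDiffOn ℝ 1 (fun x : Plane => (1 + τ - ‖x‖ ^ 2)⁻¹) (Metric.closedBall 0 1) :=
    (contDiff_const.sub (contDiff_norm_sq ℝ)).contDiffOn.inv
      fun x hx => (hd (by simpa using hx)).ne'
  have hX (i : Fin 2) : ContDiffOn ℝ 1 (fun x : Plane => x i * (1 + τ - ‖x‖ ^ 2)⁻¹)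
      (Metric.closedBall 0 1) := (coord_contDiff i).contDiffOn.mul hinv
  set X : Fin 2 → Plane → ℝ := fun i x => x i * (1 + τ - ‖x‖ ^ 2)⁻¹ with hXdef
  obtain ⟨K', hK'⟩ := hinv.exists_lipschitzOnWith one_ne_zero (convex_closedBall 0 1)
    (isCompact_closedBall 0 1)
  have hinvB := boundedMeas_of_lipschitzOn (hK'.mono Metric.ball_subset_closedBall)
  have hwB : BoundedMeas w := boundedMeas_of_lipschitzOn hw.lipschitzOnWith
  have hI : IntegrableOn (fun x => ‖w x‖ ^ 2 * ((1 + τ - ‖x‖ ^ 2)⁻¹) ^ 2)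
      (Metric.ball (0 : Plane) 1) := by
    simpa only [pow_two ((1 + τ - _)⁻¹)] using (hwB.norm_sq.mul (hinvB.mul hinvB)).integrableOn
  have hwd (i : Fin 2) : BoundedMeas (pderiv2 w i) := boundedMeas_fderiv hw.lipschitzOnWith i
  choose KX hKX using fun i => (hX i).exists_lipschitzOnWith one_ne_zero (convex_closedBall 0 1)
    (isCompact_closedBall 0 1)
  have hKX' (i : Fin 2) := (hKX i).mono Metric.ball_subset_closedBall
  have hXB (i : Fin 2) : BoundedMeas (X i) := boundedMeas_of_lipschitzOn (hKX' i)
  have hPB (i : Fin 2) : IntegrableOn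
      (fun x => fderiv ℝ (X i) x (basisVec i) * ‖w x‖ ^ 2) (Metric.ball (0 : Plane) 1) :=
    ((boundedMeas_fderiv (hKX' i) i).mul hwB.norm_sq).integrableOn
  have hQB (i : Fin 2) : IntegrableOn
      (fun x => (X i x) ^ 2 * ‖w x‖ ^ 2) (Metric.ball (0 : Plane) 1) := by
    simpa only [pow_two (X i _)] using (((hXB i).mul (hXB i)).mul hwB.norm_sq).integrableOn
  have hEi (i : Fin 2) : IntegrableOn (fun x => ‖pderiv2 w i x‖ ^ 2) (Metric.ball (0 : Plane) 1) :=
    (hwd i).norm_sq.integrableOn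
  -- The integrated form of `0 ≤ |Xᵢ w + ∂ᵢw|²`.
  have hone (i : Fin 2) :
      ∫ x in Metric.ball (0 : Plane) 1, (fderiv ℝ (X i) x (basisVec i) * ‖w x‖ ^ 2
        - (X i x) ^ 2 * ‖w x‖ ^ 2) ≤ ∫ x in Metric.ball (0 : Plane) 1, ‖pderiv2 w i x‖ ^ 2 := by
    have hibp := integral_ball_ibp_real (hKX' i) hg (fun x hx => by simp [hw0 x hx]) i
      (fun x hx => (((hX i).differentiableOn one_ne_zero) x
        (Metric.ball_subset_closedBall hx)).mono Metric.ball_subset_closedBall)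
    rw [integral_sub (hPB i) (hQB i), sub_le_iff_le_add, ← integral_add (hEi i) (hQB i), hibp,
      ← integral_neg]
    refine integral_mono_ae ((hXB i).mul (boundedMeas_fderiv hg.lipschitzOnWith i)).integrableOn.neg
      ((hEi i).add (hQB i)) (ae_restrict_of_ae ?_)
    filter_upwards [hw.ae_differentiableAt (μ := (volume : Measure Plane))] with x hx
    have h1 : fderiv ℝ (fun x => ‖w x‖ ^ 2) x (basisVec i) = 2 * inner ℝ (w x) (pderiv2 w i x) := by
      rw [(hx.hasFDerivAt.norm_sq).fderiv]
      simp [pderiv2]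
    rw [h1]
    have h2 : 0 ≤ ‖X i x • w x + pderiv2 w i x‖ ^ 2 := by positivity
    rw [norm_add_sq_real, norm_smul, mul_pow, Real.norm_eq_abs, sq_abs, real_inner_smul_left] at h2
    linarith
  refine ⟨hI, ?_⟩
  have hsum : ∫ x in Metric.ball (0 : Plane) 1, energyDensity w x =
      (∫ x in Metric.ball (0 : Plane) 1, ‖pderiv2 w 0 x‖ ^ 2) +
        ∫ x in Metric.ball (0 : Plane) 1, ‖pderiv2 w 1 x‖ ^ 2 := by
    rw [← integral_add (hEi 0) (hEi 1)]
    simp only [energyDensity, Fin.sum_univ_two]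
  rw [hsum]
  refine le_trans ?_ (add_le_add (hone 0) (hone 1))
  have hR (i : Fin 2) : IntegrableOn (fun x => fderiv ℝ (X i) x (basisVec i) * ‖w x‖ ^ 2
        - (X i x) ^ 2 * ‖w x‖ ^ 2) (Metric.ball (0 : Plane) 1) := (hPB i).sub (hQB i)
  rw [← integral_add (hR 0) (hR 1)]
  refine setIntegral_mono_on hI ((hR 0).add (hR 1)) measurableSet_ball fun x hx => ?_
  have hx1 : ‖x‖ ≤ 1 := (by simpa using hx : ‖x‖ < 1).le
  simp only [hXdef, hardy_field_fderiv hτ hx1]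
  have hn : ‖x‖ ^ 2 = x 0 ^ 2 + x 1 ^ 2 := by
    rw [EuclideanSpace.real_norm_sq_eq, Fin.sum_univ_two]
  have hdx := hd hx1
  set d := 1 + τ - ‖x‖ ^ 2 with hddef
  have h1 : d⁻¹ = d * d⁻¹ ^ 2 := by field_simp
  -- This is `div X - |X|² ≥ d⁻²`.
  have h2 : d⁻¹ ^ 2 ≤ 2 * d⁻¹ + (x 0 ^ 2 + x 1 ^ 2) * d⁻¹ ^ 2 := by
    rw [h1, ← hn]
    have h3 : 2 * (d * d⁻¹ ^ 2) + ‖x‖ ^ 2 * d⁻¹ ^ 2 = (2 * d + ‖x‖ ^ 2) * d⁻¹ ^ 2 := by ring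
    have h4 : (d * d⁻¹ ^ 2) ^ 2 = d⁻¹ ^ 2 := by rw [← h1]
    rw [h4, h3]
    have h5 : 1 ≤ 2 * d + ‖x‖ ^ 2 := by nlinarith [norm_nonneg x]
    exact le_mul_of_one_le_left (by positivity) h5
  have h6 := mul_le_mul_of_nonneg_left h2 (by positivity : 0 ≤ ‖w x‖ ^ 2)
  refine h6.trans (le_of_eq ?_)
  ring

/-! ### The energy difference -/

/-- A Lipschitz map on the closed disk that vanishes on the boundary circle stays Lipschitz when
extended by zero: compare with the value at the radial projection of the outer point. -/
lemma lipschitzWith_extend_zero {f : Plane → Space3} {K : NNReal}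
    (hf : LipschitzOnWith K f (Metric.closedBall 0 1))
    (hf0 : ∀ x ∈ Metric.sphere (0 : Plane) 1, f x = 0) :
    LipschitzWith (2 * K) ((Metric.closedBall (0 : Plane) 1).indicator f) := by
  have hmixed (x y : Plane) (hx : x ∈ Metric.closedBall (0 : Plane) 1)
      (hy : y ∉ Metric.closedBall (0 : Plane) 1) : ‖f x‖ ≤ 2 * K * ‖x - y‖ := by
    have hx' : ‖x‖ ≤ 1 := by simpa using hx
    have hy' : 1 < ‖y‖ := by simpa using hy
    set z : Plane := ‖y‖⁻¹ • y with hz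
    have hz1 : ‖z‖ = 1 := by
      rw [hz, norm_smul, norm_inv, norm_norm, inv_mul_cancel₀ (by linarith)]
    have hyz : ‖y - z‖ = ‖y‖ - 1 := by
      have : y - z = (1 - ‖y‖⁻¹) • y := by rw [sub_smul, one_smul]
      have h1 : ‖y‖⁻¹ ≤ 1 := inv_le_one_of_one_le₀ hy'.le
      rw [this, norm_smul, Real.norm_of_nonneg (by linarith), sub_mul, one_mul,
        inv_mul_cancel₀ (by linarith)]
    have h1 := hf.norm_sub_le hx (show z ∈ Metric.closedBall (0 : Plane) 1 by simp [hz1])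
    rw [hf0 z (by simp [hz1]), sub_zero] at h1
    have h2 := norm_sub_le_norm_sub_add_norm_sub x y z
    have h3 := norm_le_norm_add_norm_sub x y
    have h4 : ‖x - z‖ ≤ 2 * ‖x - y‖ := by linarith
    calc ‖f x‖ ≤ K * ‖x - z‖ := h1
      _ ≤ K * (2 * ‖x - y‖) := by gcongr
      _ = 2 * K * ‖x - y‖ := by ring
  refine LipschitzWith.of_dist_le_mul fun x y => ?_
  rw [dist_eq_norm, dist_eq_norm]
  push_cast
  by_cases hx : x ∈ Metric.closedBall (0 : Plane) 1 <;>
    by_cases hy : y ∈ Metric.closedBall (0 : Plane) 1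
  · rw [Set.indicator_of_mem hx, Set.indicator_of_mem hy]
    have := hf.norm_sub_le hx hy
    have : 0 ≤ K * ‖x - y‖ := by positivity
    linarith
  · rw [Set.indicator_of_mem hx, Set.indicator_of_notMem hy, sub_zero]
    exact hmixed x y hx hy
  · rw [Set.indicator_of_notMem hx, Set.indicator_of_mem hy, zero_sub, norm_neg, norm_sub_rev]
    exact hmixed y x hy hx
  · rw [Set.indicator_of_notMem hx, Set.indicator_of_notMem hy, sub_zero, norm_zero]
    positivity

/-- The first variation of the energy of `v` in the direction `w`, where `v + w` is again
sphere-valued: the harmonic map equation turns it into `∫|∇v|²⟨v, w⟩`, and `2⟨v, w⟩ = -|w|²`. -/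
lemma energy_difference {v w : Plane → Space3} {K : NNReal}
    (hv : ContDiffOn ℝ 2 v (Metric.closedBall 0 1))
    (hv1 : ∀ x ∈ Metric.closedBall (0 : Plane) 1, ‖v x‖ = 1)
    (hharm : ∀ x ∈ Metric.ball (0 : Plane) 1, laplacian2 v x + energyDensity v x • v x = 0)
    (hw : LipschitzWith K w) (hw0 : ∀ x : Plane, 1 ≤ ‖x‖ → w x = 0)
    (hvw : ∀ x ∈ Metric.ball (0 : Plane) 1, ‖v x + w x‖ = 1) :
    2 * ∫ x in Metric.ball (0 : Plane) 1, ∑ i, inner ℝ (pderiv2 v i x) (pderiv2 w i x) =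
      - ∫ x in Metric.ball (0 : Plane) 1, energyDensity v x * ‖w x‖ ^ 2 := by
  obtain ⟨D, hD, hDv⟩ := exists_pderiv2_extension hv
  choose KD hKD using fun i => (hD i).exists_lipschitzOnWith one_ne_zero (convex_closedBall 0 1)
    (isCompact_closedBall 0 1)
  have hL (i : Fin 2) : LipschitzOnWith (KD i) (pderiv2 v i) (Metric.ball 0 1) := by
    intro x hx y hy
    rw [hDv i x hx, hDv i y hy]
    exact hKD i (Metric.ball_subset_closedBall hx) (Metric.ball_subset_closedBall hy)
  have hdiff (i : Fin 2) : DifferentiableOn ℝ (pderiv2 v i) (Metric.ball 0 1) :=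
    (((hD i).differentiableOn one_ne_zero).mono Metric.ball_subset_closedBall).congr (hDv i)
  have hwB : BoundedMeas w := boundedMeas_of_lipschitzOn hw.lipschitzOnWith
  have hI (i : Fin 2) : IntegrableOn (fun x => inner ℝ (pderiv2 v i x) (pderiv2 w i x))
      (Metric.ball (0 : Plane) 1) :=
    ((boundedMeas_of_lipschitzOn (hL i)).inner
      (boundedMeas_fderiv hw.lipschitzOnWith i)).integrableOn
  have hJ (i : Fin 2) : IntegrableOn (fun x => inner ℝ (fderiv ℝ (pderiv2 v i) x (basisVec i)) (w x))
      (Metric.ball (0 : Plane) 1) :=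
    ((boundedMeas_fderiv (hL i) i).inner hwB).integrableOn
  have hibp (i : Fin 2) : ∫ x in Metric.ball (0 : Plane) 1, inner ℝ (pderiv2 v i x) (pderiv2 w i x)
      = - ∫ x in Metric.ball (0 : Plane) 1,
        inner ℝ (fderiv ℝ (pderiv2 v i) x (basisVec i)) (w x) := by
    rw [integral_ball_ibp (hL i) hw hw0 i (hdiff i), neg_neg]
    rfl
  rw [integral_finsetSum _ fun i _ => hI i, Finset.sum_congr rfl fun i _ => hibp i,
    Finset.sum_neg_distrib, ← integral_finsetSum _ fun i _ => hJ i, mul_neg, neg_inj,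
    ← integral_const_mul]
  refine setIntegral_congr_fun measurableSet_ball fun x hx => ?_
  have hlap : laplacian2 v x = -(energyDensity v x • v x) := eq_neg_of_add_eq_zero_left (hharm x hx)
  have h1 : ∑ i, inner ℝ (fderiv ℝ (pderiv2 v i) x (basisVec i)) (w x)
      = inner ℝ (laplacian2 v x) (w x) := by
    rw [laplacian2, sum_inner]
    rfl
  have h2 := hvw x hx
  have h3 : ‖v x + w x‖ ^ 2 = 1 := by rw [h2, one_pow]
  rw [norm_add_sq_real, hv1 x (Metric.ball_subset_closedBall hx)] at h3
  beta_reduce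
  rw [h1, hlap, inner_neg_left, real_inner_smul_left]
  have h4 : 2 * inner ℝ (v x) (w x) = - ‖w x‖ ^ 2 := by linarith
  linear_combination (-energyDensity v x) * h4

/-- The interior gradient bound combined with the Hardy inequality. -/
lemma weighted_le_half_energy {v w : Plane → Space3} {K : NNReal} {N : ℝ}
    (hv : ContDiffOn ℝ 2 v (Metric.closedBall 0 1))
    (hbd : ∀ x ∈ Metric.ball (0 : Plane) 1, (1 - ‖x‖) ^ 2 * energyDensity v x ≤ 1 / 256)
    (hw : LipschitzWith K w) (hw0 : ∀ x : Plane, 1 ≤ ‖x‖ → w x = 0) (hN : ∀ x, ‖w x‖ ≤ N) :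
    ∫ x in Metric.ball (0 : Plane) 1, energyDensity v x * ‖w x‖ ^ 2 ≤
      (1 / 2) * ∫ x in Metric.ball (0 : Plane) 1, energyDensity w x := by
  obtain ⟨D, hD, hDv⟩ := exists_pderiv2_extension hv
  have hc : ContinuousOn (fun x => ∑ i, ‖D i x‖ ^ 2) (Metric.closedBall (0 : Plane) 1) :=
    continuousOn_finsetSum _ fun i _ => (hD i).continuousOn.norm.pow 2
  obtain ⟨M, hM⟩ := (isCompact_closedBall (0 : Plane) 1).exists_bound_of_continuousOn hc
  have he {x : Plane} (hx : x ∈ Metric.ball (0 : Plane) 1) : energyDensity v x ≤ M := by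
    simp only [energyDensity, hDv _ x hx]
    exact (le_abs_self _).trans (hM x (Metric.ball_subset_closedBall hx))
  have hM0 : 0 ≤ M := (energyDensity_nonneg v 0).trans (he (Metric.mem_ball_self one_pos))
  -- The choice of `τ` makes the error `3 τ M` at most `1 / 4`.
  set τ : ℝ := 1 / (12 * (M + 1)) with hτ
  have hτ0 : 0 < τ := by positivity
  have hτ1 : τ ≤ 1 := by
    rw [hτ, div_le_one (by positivity)]; linarith
  have hτM : 12 * (τ * M) ≤ 1 := by
    have : τ * (12 * (M + 1)) = 1 := by rw [hτ]; field_simp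
    nlinarith
  obtain ⟨hI, hH⟩ := hardy hw hw0 hN hτ0
  refine le_trans ?_ (mul_le_mul_of_nonneg_left hH (by norm_num))
  rw [← integral_const_mul]
  refine integral_mono_of_nonneg (Filter.Eventually.of_forall fun x =>
    mul_nonneg (energyDensity_nonneg v x) (by positivity)) (hI.const_mul _) ?_
  refine (ae_restrict_iff' measurableSet_ball).2 (Filter.Eventually.of_forall fun x hx => ?_)
  have hx1 : ‖x‖ < 1 := by simpa using hx
  have hx0 := norm_nonneg x
  have hd : 0 < 1 + τ - ‖x‖ ^ 2 := by nlinarith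
  have hen := energyDensity_nonneg v x
  have key : energyDensity v x ≤ 1 / 2 * ((1 + τ - ‖x‖ ^ 2)⁻¹) ^ 2 := by
    rw [inv_pow, ← div_eq_mul_inv, le_div_iff₀ (by positivity)]
    have h1 : (1 + τ - ‖x‖ ^ 2) ^ 2 ≤ 4 * (1 - ‖x‖) ^ 2 + 3 * τ := by
      have h2 : (1 - ‖x‖ ^ 2) ^ 2 ≤ 4 * (1 - ‖x‖) ^ 2 := by
        have : (1 - ‖x‖ ^ 2) ^ 2 = (1 + ‖x‖) ^ 2 * (1 - ‖x‖) ^ 2 := by ring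
        rw [this]
        refine mul_le_mul_of_nonneg_right ?_ (by positivity)
        nlinarith
      nlinarith [mul_nonneg hτ0.le (sq_nonneg ‖x‖)]
    have h3 := mul_le_mul_of_nonneg_left h1 hen
    have h4 := hbd x hx
    have h5 := mul_le_mul_of_nonneg_left (he hx) hτ0.le
    nlinarith
  calc energyDensity v x * ‖w x‖ ^ 2
      ≤ 1 / 2 * ((1 + τ - ‖x‖ ^ 2)⁻¹) ^ 2 * ‖w x‖ ^ 2 := by gcongr
    _ = 1 / 2 * (‖w x‖ ^ 2 * ((1 + τ - ‖x‖ ^ 2)⁻¹) ^ 2) := by ring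

/-- Energy gap / energy convexity (Theorem 3.1 of Colding–Minicozzi, for sphere-valued
maps): if `v` is a C² harmonic map of the unit disk into `S²` with small energy and `u`
is any Lipschitz sphere-valued map with the same boundary values, then
`∫|∇u|² − ∫|∇v|² ≥ ½∫|∇u − ∇v|²`. -/
theorem energy_convexity_sphere :
    ∃ ε₁ : ℝ, 0 < ε₁ ∧
      ∀ u v : EuclideanSpace ℝ (Fin 2) → EuclideanSpace ℝ (Fin 3),
        ContDiffOn ℝ 2 v (Metric.closedBall 0 1) →
        (∀ x ∈ Metric.closedBall (0 : EuclideanSpace ℝ (Fin 2)) 1, ‖v x‖ = 1) →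
        (∀ x ∈ Metric.ball (0 : EuclideanSpace ℝ (Fin 2)) 1,
          laplacian2 v x + energyDensity v x • v x = 0) →
        (∫ x in Metric.ball (0 : EuclideanSpace ℝ (Fin 2)) 1, energyDensity v x) ≤ ε₁ →
        (∃ K : NNReal, LipschitzOnWith K u (Metric.closedBall 0 1)) →
        (∀ x ∈ Metric.closedBall (0 : EuclideanSpace ℝ (Fin 2)) 1, ‖u x‖ = 1) →
        (∀ x ∈ Metric.sphere (0 : EuclideanSpace ℝ (Fin 2)) 1, u x = v x) →
        (1 / 2) * (∫ x in Metric.ball (0 : EuclideanSpace ℝ (Fin 2)) 1,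
            ∑ i : Fin 2, ‖pderiv2 u i x - pderiv2 v i x‖ ^ 2) ≤
          (∫ x in Metric.ball (0 : EuclideanSpace ℝ (Fin 2)) 1, energyDensity u x) -
            ∫ x in Metric.ball (0 : EuclideanSpace ℝ (Fin 2)) 1, energyDensity v x := by
  have hC := gradConst_pos
  set s : ℝ := 1 / (128 * gradConst) with hs
  have hs0 : 0 < s := by positivity
  have hCs : gradConst * s = 1 / 128 := by rw [hs]; field_simp
  refine ⟨s ^ 2, by positivity, ?_⟩
  intro u v hv hv1 hharm hE ⟨Ku, hKu⟩ hu1 huv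
  obtain ⟨Kv, hKv⟩ := hv.exists_lipschitzOnWith two_ne_zero (convex_closedBall 0 1)
    (isCompact_closedBall 0 1)
  set w : Plane → Space3 := (Metric.closedBall (0 : Plane) 1).indicator (fun x => u x - v x)
    with hwdef
  have hw : LipschitzWith (2 * (Ku + Kv)) w :=
    lipschitzWith_extend_zero (hKu.sub hKv) fun x hx => by rw [huv x hx, sub_self]
  have hwin {x : Plane} (hx : x ∈ Metric.closedBall (0 : Plane) 1) : w x = u x - v x :=
    Set.indicator_of_mem hx _
  have hw0 (x : Plane) (hx : 1 ≤ ‖x‖) : w x = 0 := by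
    rcases hx.eq_or_lt with h | h
    · rw [hwin (by simp [← h]), huv x (by simp [← h]), sub_self]
    · exact Set.indicator_of_notMem (by simpa using h) _
  have hwN (x : Plane) : ‖w x‖ ≤ 2 := by
    by_cases hx : x ∈ Metric.closedBall (0 : Plane) 1
    · rw [hwin hx]
      have := norm_sub_le (u x) (v x)
      rw [hu1 x hx, hv1 x hx] at this
      linarith
    · rw [hwdef, Set.indicator_of_notMem hx]
      simp
  have hgrad : ∀ x ∈ Metric.ball (0 : Plane) 1, (1 - ‖x‖) ^ 2 * energyDensity v x ≤ 1 / 256 := by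
    have := interior_gradient_bound hv hv1 hharm hs0 (by rw [mul_assoc, hCs]; norm_num) hE
    rw [mul_assoc, hCs] at this
    norm_num at this ⊢
    exact this
  have hdiff := energy_difference hv hv1 hharm hw hw0 (fun x hx => by
    have hx' := Metric.ball_subset_closedBall hx
    rw [hwin hx', add_sub_cancel]
    exact hu1 x hx')
  have hhalf := weighted_le_half_energy hv hgrad hw hw0 hwN
  have hpd : ∀ᵐ x ∂(volume.restrict (Metric.ball (0 : Plane) 1)),
      ∀ i, pderiv2 u i x = pderiv2 v i x + pderiv2 w i x := by
    rw [ae_restrict_iff' measurableSet_ball]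
    filter_upwards [hw.ae_differentiableAt (μ := (volume : Measure Plane))] with x hx hxb i
    have hnhds := Metric.isOpen_ball.mem_nhds hxb
    have h1 : u =ᶠ[nhds x] fun z => v z + w z := by
      filter_upwards [hnhds] with z hz
      rw [hwin (Metric.ball_subset_closedBall hz), add_sub_cancel]
    have h2 : DifferentiableAt ℝ v x := (hv.contDiffAt
      (Filter.mem_of_superset hnhds Metric.ball_subset_closedBall)).differentiableAt two_ne_zero
    simp only [pderiv2, h1.fderiv_eq, fderiv_fun_add h2 hx, add_apply]
  have hwI : IntegrableOn (energyDensity w) (Metric.ball 0 1) :=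
    BoundedMeas.energyDensity fun i => boundedMeas_fderiv hw.lipschitzOnWith i
  have hvI := energyDensity_integrableOn hv
  have hvB (i : Fin 2) : BoundedMeas (pderiv2 v i) :=
    boundedMeas_fderiv (hKv.mono Metric.ball_subset_closedBall) i
  have hcross : IntegrableOn (fun x => ∑ i, inner ℝ (pderiv2 v i x) (pderiv2 w i x))
      (Metric.ball (0 : Plane) 1) :=
    integrable_finsetSum _ fun i _ =>
      ((hvB i).inner (boundedMeas_fderiv hw.lipschitzOnWith i)).integrableOn
  have hEw : ∫ x in Metric.ball (0 : Plane) 1, ∑ i : Fin 2, ‖pderiv2 u i x - pderiv2 v i x‖ ^ 2 =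
      ∫ x in Metric.ball (0 : Plane) 1, energyDensity w x := by
    refine integral_congr_ae ?_
    filter_upwards [hpd] with x hx
    simp only [hx, add_sub_cancel_left, energyDensity]
  have hEu : ∫ x in Metric.ball (0 : Plane) 1, energyDensity u x =
      (∫ x in Metric.ball (0 : Plane) 1, energyDensity v x) +
      2 * (∫ x in Metric.ball (0 : Plane) 1, ∑ i, inner ℝ (pderiv2 v i x) (pderiv2 w i x)) +
      ∫ x in Metric.ball (0 : Plane) 1, energyDensity w x := by
    have hc2 : IntegrableOn (fun x => 2 * ∑ i, inner ℝ (pderiv2 v i x) (pderiv2 w i x))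
      (Metric.ball (0 : Plane) 1) := hcross.const_mul 2
    have hvc : IntegrableOn (fun x => energyDensity v x +
      2 * ∑ i, inner ℝ (pderiv2 v i x) (pderiv2 w i x)) (Metric.ball (0 : Plane) 1) := hvI.add hc2
    rw [← integral_const_mul, ← integral_add hvI hc2, ← integral_add hvc hwI]
    refine integral_congr_ae ?_
    filter_upwards [hpd] with x hx
    simp only [energyDensity, hx, Fin.sum_univ_two, norm_add_sq_real]
    ring
  rw [hEw, hEu, hdiff]
  linarith
end
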